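/- There exist absolute constants C, c > 0 such that the following holds for every φ ∈ (0,1] and every integer f' with C·log n ≤ f' ≤ n. Every n-vertex graph G with conductance Φ(G) ≥ φ and minimum degree at least f' admits a subgraph H ⊆ G with V(H) = V(G) such that: (i) the conductance of H is at least φ^2/(C·(log n)^c); (ii) |E(H)| ≤ C·f'·n·(log n)/φ; and (iii) the minimum degree of H is at least f'·φ/(C·(log n)^c). -/

import Mathlib

open SimpleGraph

/-- The volume of a vertex set `S`: the sum of the degrees (in `G`) of the vertices of `S`. -/
noncomputable def vol {V : Type} (G : SimpleGraph V) (S : Finset V) : ℕ :=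
  ∑ v ∈ S, (G.neighborSet v).ncard

/-- The set of edges of `G` with exactly one endpoint in `S`. -/
def edgeBoundary {V : Type} (G : SimpleGraph V) (S : Finset V) : Set (Sym2 V) :=
  {e | e ∈ G.edgeSet ∧ ∃ u v : V, e = s(u, v) ∧ u ∈ S ∧ v ∉ S}

/-- The conductance of the cut `S` in `G`. -/
noncomputable def cutConductance {V : Type} [Fintype V] [DecidableEq V]
    (G : SimpleGraph V) (S : Finset V) : ℝ :=
  (edgeBoundary G S).ncard / (min (vol G S) (vol G Sᶜ) : ℕ)

/-- `G` is a `φ`-expander: every nonempty proper cut has conductance at least `φ`. -/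
def IsExpander {V : Type} [Fintype V] [DecidableEq V] (G : SimpleGraph V) (φ : ℝ) : Prop :=
  ∀ S : Finset V, S.Nonempty → S ≠ Finset.univ → φ ≤ cutConductance G S

set_option linter.unusedSectionVars false

section aux
variable {V : Type} [Fintype V] [DecidableEq V]

lemma coarea_aux (a : V → V → ℝ) (d : V → ℝ) (S : Finset V) (ψ : ℝ)
    (h : ∀ X : Finset V, Disjoint X S → ψ * ∑ v ∈ X, d v ≤ ∑ v ∈ X, ∑ u ∈ Xᶜ, a v u) :
    ∀ (k : ℕ) (g : V → ℝ), (Finset.univ.filter (fun v => 0 < g v)).card ≤ k →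
      (∀ v, 0 ≤ g v) → (∀ v ∈ S, g v = 0) →
      ψ * ∑ v, d v * g v ≤ ∑ v, ∑ u, a v u * max 0 (g v - g u) := by
  intro k
  induction k with
  | zero =>
    intro g hc h0 hS
    have hz : ∀ v, g v = 0 := by
      intro v
      by_contra hne
      have : v ∈ Finset.univ.filter (fun v => 0 < g v) := by
        simp; exact lt_of_le_of_ne (h0 v) (Ne.symm hne)
      have := Finset.card_pos.mpr ⟨v, this⟩
      omega
    simp [hz]
  | succ k ih =>
    intro g hc h0 hS
    set X := Finset.univ.filter (fun v => 0 < g v) with hX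
    have memX : ∀ v, v ∈ X ↔ 0 < g v := by intro v; simp [hX]
    have nX : ∀ v, v ∉ X → g v = 0 := by
      intro v hv
      rw [memX] at hv
      exact le_antisymm (not_lt.mp hv) (h0 v)
    rcases X.eq_empty_or_nonempty with he | hne
    · have hz : ∀ v, g v = 0 := fun v => nX v (by simp [he])
      simp [hz]
    obtain ⟨m, hm, hmin⟩ := X.exists_min_image g hne
    set t := g m with ht
    have htpos : 0 < t := (memX m).1 hm
    let g' : V → ℝ := fun v => if v ∈ X then g v - t else 0
    have hsub : Finset.univ.filter (fun v => 0 < g' v) ⊆ X.erase m := by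
      intro v hv
      simp only [Finset.mem_filter, Finset.mem_univ, true_and, g'] at hv
      split_ifs at hv with hvX
      · rw [Finset.mem_erase]
        refine ⟨?_, hvX⟩
        rintro rfl
        simp [ht] at hv
      · exact absurd hv (lt_irrefl _)
    have hcard : (Finset.univ.filter (fun v => 0 < g' v)).card ≤ k := by
      have h1 := Finset.card_le_card hsub
      rw [Finset.card_erase_of_mem hm] at h1
      omega
    have hdis : Disjoint X S := by
      rw [Finset.disjoint_left]
      intro v hv hvS
      have := (memX v).1 hv
      rw [hS v hvS] at this
      exact lt_irrefl _ this
    have key := ih g' hcard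
      (by intro v; simp only [g']; split_ifs with hv
          · have := hmin v hv; linarith
          · exact le_refl _)
      (by intro v hv
          have : v ∉ X := Finset.disjoint_right.mp hdis hv
          simp [g', this])
    have hcut := h X hdis
    have e1 : ∑ v, d v * g v = ∑ v, d v * g' v + t * ∑ v ∈ X, d v := by
      rw [Finset.mul_sum, ← Finset.sum_filter_add_sum_filter_not Finset.univ (fun v => v ∈ X) (fun v => d v * g v),
        ← Finset.sum_filter_add_sum_filter_not Finset.univ (fun v => v ∈ X) (fun v => d v * g' v)]
      have a1 : ∑ v ∈ Finset.univ.filter (fun v => v ∉ X), d v * g v = 0 :=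
        Finset.sum_eq_zero (fun v hv => by rw [nX v (by simpa using hv)]; ring)
      have a2 : ∑ v ∈ Finset.univ.filter (fun v => v ∉ X), d v * g' v = 0 :=
        Finset.sum_eq_zero (fun v hv => by
          have : v ∉ X := by simpa using hv
          simp [g', this])
      have a3 : Finset.univ.filter (fun v => v ∈ X) = X := by ext; simp
      rw [a1, a2, a3, add_zero, add_zero, ← Finset.sum_add_distrib]
      refine Finset.sum_congr rfl (fun v hv => ?_)
      simp only [g', if_pos hv]; ring
    have e2 : ∑ v, ∑ u, a v u * max 0 (g v - g u)
        = ∑ v, ∑ u, a v u * max 0 (g' v - g' u) + t * ∑ v ∈ X, ∑ u ∈ Xᶜ, a v u := by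
      have : ∑ v ∈ X, ∑ u ∈ Xᶜ, a v u
          = ∑ v, ∑ u, (if v ∈ X ∧ u ∉ X then a v u else 0) := by
        have b1 : ∀ v, ∑ u, (if v ∈ X ∧ u ∉ X then a v u else 0)
            = if v ∈ X then ∑ u ∈ Xᶜ, a v u else 0 := by
          intro v
          by_cases hv : v ∈ X
          · simp only [hv, true_and, if_true]
            rw [← Finset.sum_filter]
            congr 1
            ext; simp
          · simp [hv]
        simp only [b1]
        rw [← Finset.sum_filter]
        congr 1
        ext; simp
      rw [this, Finset.mul_sum, ← Finset.sum_add_distrib]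
      refine Finset.sum_congr rfl (fun v _ => ?_)
      rw [Finset.mul_sum, ← Finset.sum_add_distrib]
      refine Finset.sum_congr rfl (fun u _ => ?_)
      by_cases hv : v ∈ X <;> by_cases hu : u ∈ X
      · simp [g', hv, hu]
      · have hv' := hmin v hv
        simp only [g', hv, hu, nX u hu, if_true, if_false, not_false_eq_true, and_self]
        rw [max_eq_right (by linarith), max_eq_right (by linarith)]; ring
      · have hu' := hmin u hu
        simp only [g', hv, hu, nX v hv, if_true, if_false, not_true_eq_false, and_self]
        rw [max_eq_left (by linarith), max_eq_left (by linarith)]; ring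
      · simp [g', hv, hu, nX v hv, nX u hu]
    rw [e1, e2]
    have := mul_le_mul_of_nonneg_left hcut htpos.le
    nlinarith [key, this]

lemma sum_pairs_le (w : Sym2 V → ℝ) (hw : ∀ e, 0 ≤ w e) :
    ∑ v : V, ∑ u : V, w s(v, u) ≤ 2 * ∑ e, w e := by
  rw [← Fintype.sum_prod_type' (f := fun v u => w s(v, u))]
  have := Finset.sum_fiberwise (s := (Finset.univ : Finset (V × V)))
    (g := fun p => s(p.1, p.2)) (f := fun p => w s(p.1, p.2))
  rw [← this, Finset.mul_sum]
  refine Finset.sum_le_sum (fun e _ => ?_)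
  have h1 : ∑ p ∈ Finset.univ.filter (fun p : V × V => s(p.1, p.2) = e), w s(p.1, p.2)
      = ∑ p ∈ Finset.univ.filter (fun p : V × V => s(p.1, p.2) = e), w e :=
    Finset.sum_congr rfl (fun p hp => by rw [(Finset.mem_filter.1 hp).2])
  rw [h1, Finset.sum_const, nsmul_eq_mul]
  refine mul_le_mul_of_nonneg_right ?_ (hw e)
  induction e with | h x y => ?_
  have : Finset.univ.filter (fun p : V × V => s(p.1, p.2) = s(x, y)) ⊆ {(x, y), (y, x)} := by
    intro p hp
    have := (Finset.mem_filter.1 hp).2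
    rw [Sym2.eq_iff] at this
    simp [Prod.ext_iff]
    exact this
  have h2 := (Finset.card_le_card this).trans (Finset.card_le_two)
  exact_mod_cast h2

/-- cost of a walk -/
noncomputable def wcost {G : SimpleGraph V} (w : Sym2 V → ℝ) {u v : V} (p : G.Walk u v) : ℝ :=
  ∑ e ∈ p.edges.toFinset, w e

lemma wcost_append {G : SimpleGraph V} (w : Sym2 V → ℝ) (hw : ∀ e, 0 ≤ w e) {u v x : V}
    (p : G.Walk u v) (q : G.Walk v x) : wcost w (p.append q) ≤ wcost w p + wcost w q := by
  unfold wcost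
  rw [SimpleGraph.Walk.edges_append, List.toFinset_append,
    ← Finset.sum_union_inter]
  linarith [Finset.sum_nonneg (s := p.edges.toFinset ∩ q.edges.toFinset) (fun e _ => hw e)]

lemma wcost_reverse {G : SimpleGraph V} (w : Sym2 V → ℝ) {u v : V}
    (p : G.Walk u v) : wcost w p.reverse = wcost w p := by
  unfold wcost
  rw [SimpleGraph.Walk.edges_reverse, List.toFinset_reverse]

lemma wcost_cons {G : SimpleGraph V} (w : Sym2 V → ℝ) (hw : ∀ e, 0 ≤ w e) {u v x : V}
    (h : G.Adj u v) (q : G.Walk v x) : wcost w (q.cons h) ≤ w s(u, v) + wcost w q := by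
  unfold wcost
  rw [SimpleGraph.Walk.edges_cons, List.toFinset_cons, Finset.insert_eq, 
    ← Finset.sum_singleton w s(u,v), ← Finset.sum_union_inter]
  linarith [Finset.sum_nonneg (s := {s(u,v)} ∩ q.edges.toFinset) (fun e _ => hw e)]

/-- reachability with `i` hops and cost `r` -/
def Rch (G : SimpleGraph V) (w : Sym2 V → ℝ) (i : ℕ) (r : ℝ) (u v : V) : Prop :=
  ∃ p : G.Walk u v, p.length ≤ i ∧ wcost w p ≤ r

lemma Rch.trans {G : SimpleGraph V} {w : Sym2 V → ℝ} (hw : ∀ e, 0 ≤ w e) {i j : ℕ} {r s : ℝ}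
    {u v x : V} (h : Rch G w i r u v) (h' : Rch G w j s v x) : Rch G w (i + j) (r + s) u x := by
  obtain ⟨p, hp, hp'⟩ := h
  obtain ⟨q, hq, hq'⟩ := h'
  refine ⟨p.append q, ?_, ?_⟩
  · rw [SimpleGraph.Walk.length_append]; omega
  · linarith [wcost_append w hw p q]

lemma Rch.symm {G : SimpleGraph V} {w : Sym2 V → ℝ} {i : ℕ} {r : ℝ}
    {u v : V} (h : Rch G w i r u v) : Rch G w i r v u := by
  obtain ⟨p, hp, hp'⟩ := h
  exact ⟨p.reverse, by simpa using hp, by rw [wcost_reverse]; exact hp'⟩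

lemma Rch.mono {G : SimpleGraph V} {w : Sym2 V → ℝ} {i j : ℕ} {r s : ℝ}
    {u v : V} (h : Rch G w i r u v) (hi : i ≤ j) (hr : r ≤ s) : Rch G w j s u v := by
  obtain ⟨p, hp, hp'⟩ := h
  exact ⟨p, hp.trans hi, hp'.trans hr⟩

lemma reach_aux (G : SimpleGraph V) (a : V → V → ℝ) (d : V → ℝ) (S : Finset V) (ψ : ℝ)
    (hψ : 0 < ψ) (hψ1 : ψ ≤ 1)
    (ha1 : ∀ u v, G.Adj u v → a u v = 1) (ha0 : ∀ u v, ¬ G.Adj u v → a u v = 0)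
    (hd : ∀ v, d v = ∑ u, a v u)
    (h : ∀ X : Finset V, Disjoint X S → ψ * ∑ v ∈ X, d v ≤ ∑ v ∈ X, ∑ u ∈ Xᶜ, a v u)
    (w : Sym2 V → ℝ) (hw : ∀ e, 0 ≤ w e) (Δ : ℝ) (hΔ : 0 ≤ Δ) (i : ℕ) :
    ∃ g : V → ℝ, (∀ v, 0 ≤ g v) ∧ (∀ v, g v ≤ Δ) ∧ (∀ v ∈ S, g v = 0) ∧
      (∀ v, g v < Δ → ∃ s ∈ S, Rch G w i (g v) v s) ∧
      ∑ v, d v * g v ≤ (1 - ψ) ^ i * (Δ * ∑ v, d v) + 2 * (∑ e, w e) / ψ := by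
  have hdn : ∀ v, 0 ≤ d v := by
    intro v; rw [hd]; refine Finset.sum_nonneg (fun u _ => ?_)
    by_cases hh : G.Adj v u
    · rw [ha1 _ _ hh]; norm_num
    · rw [ha0 _ _ hh]
  have hW : 0 ≤ ∑ e, w e := Finset.sum_nonneg (fun e _ => hw e)
  induction i with
  | zero =>
    refine ⟨fun v => if v ∈ S then 0 else Δ, ?_, ?_, ?_, ?_, ?_⟩
    · intro v; simp only; split_ifs <;> linarith
    · intro v; simp only; split_ifs <;> linarith
    · intro v hv; simp [hv]
    · intro v hv
      simp only at hv
      split_ifs at hv with hvS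
      · exact ⟨v, hvS, SimpleGraph.Walk.nil, by simp, by simp [wcost, hvS]⟩
      · exact absurd hv (lt_irrefl _)
    · have : ∑ v, d v * (if v ∈ S then 0 else Δ) ≤ Δ * ∑ v, d v := by
        rw [Finset.mul_sum]
        refine Finset.sum_le_sum (fun v _ => ?_)
        have := hdn v
        split_ifs
        · simp; positivity
        · linarith
      have h2 : 0 ≤ 2 * (∑ e, w e) / ψ := by positivity
      simp only [pow_zero, one_mul]
      linarith
  | succ i ih =>
    obtain ⟨g, g0, gΔ, gS, gR, gQ⟩ := ih
    classical
    let f : V → V → ℝ := fun v u => if G.Adj v u then min (g v) (g u + w s(v, u)) else g v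
    let g' : V → ℝ := fun v => Finset.univ.inf' ⟨v, Finset.mem_univ v⟩ (f v)
    have g'le : ∀ v u, g' v ≤ f v u := fun v u => Finset.inf'_le _ (Finset.mem_univ u)
    have g'ex : ∀ v, ∃ u, g' v = f v u := by
      intro v
      obtain ⟨u, _, hu⟩ := Finset.exists_mem_eq_inf' (s := Finset.univ) ⟨v, Finset.mem_univ v⟩ (f v)
      exact ⟨u, hu⟩
    have g'g : ∀ v, g' v ≤ g v := by
      intro v
      have := g'le v v
      simpa [f] using this
    have g'0 : ∀ v, 0 ≤ g' v := by
      intro v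
      obtain ⟨u, hu⟩ := g'ex v
      rw [hu]; simp only [f]
      split_ifs
      · exact le_min (g0 v) (add_nonneg (g0 u) (hw _))
      · exact g0 v
    refine ⟨g', g'0, fun v => (g'g v).trans (gΔ v), ?_, ?_, ?_⟩
    · intro v hv
      exact le_antisymm ((g'g v).trans (gS v hv).le) (g'0 v)
    · intro v hv
      have old : g' v = g v → ∃ s ∈ S, Rch G w (i+1) (g' v) v s := by
        intro hgv
        obtain ⟨s, hs, hR⟩ := gR v (hgv ▸ hv)
        exact ⟨s, hs, hR.mono (Nat.le_succ i) hgv.ge⟩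
      obtain ⟨u, hu⟩ := g'ex v
      simp only [f] at hu
      split_ifs at hu with hadj
      · rcases min_choice (g v) (g u + w s(v, u)) with hm | hm
        · exact old (hu.trans hm)
        · rw [hm] at hu
          have : g u < Δ := by have := hw s(v, u); linarith
          obtain ⟨s, hs, p, hp, hp'⟩ := gR u this
          refine ⟨s, hs, p.cons hadj, by simpa using hp, ?_⟩
          have := wcost_cons w hw hadj p
          linarith
      · exact old hu
    · have key := coarea_aux a d S ψ h _ g le_rfl g0 gS
      have s1 : ∑ v, ∑ u, a v u * max 0 (g v - g u) - ∑ v, ∑ u, w s(v, u)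
          ≤ ∑ v, d v * (g v - g' v) := by
        rw [← Finset.sum_sub_distrib]
        refine Finset.sum_le_sum (fun v _ => ?_)
        rw [← Finset.sum_sub_distrib, hd, Finset.sum_mul]
        refine Finset.sum_le_sum (fun u _ => ?_)
        have hwvu := hw s(v, u)
        have h1 := g'g v
        by_cases hadj : G.Adj v u
        · rw [ha1 _ _ hadj]
          have h2 := g'le v u
          simp only [f, if_pos hadj] at h2
          have h3 := h2.trans (min_le_right _ _)
          rcases max_choice 0 (g v - g u) with hm | hm <;> rw [hm] <;> linarith
        · rw [ha0 _ _ hadj]; linarith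
      have s2 := sum_pairs_le w hw
      have s3 : ∑ v, d v * (g v - g' v) = ∑ v, d v * g v - ∑ v, d v * g' v := by
        rw [← Finset.sum_sub_distrib]
        exact Finset.sum_congr rfl (fun v _ => by ring)
      have s4 : ∑ v, d v * g' v ≤ (1 - ψ) * ∑ v, d v * g v + 2 * ∑ e, w e := by linarith
      have s5 := mul_le_mul_of_nonneg_left gQ (sub_nonneg.mpr hψ1)
      have s6 : (1 - ψ) * (2 * (∑ e, w e) / ψ) + 2 * ∑ e, w e = 2 * (∑ e, w e) / ψ := by
        field_simp; ring
      rw [pow_succ]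
      nlinarith

/-- the expander context, in terms of indicator sums -/
structure ECtx (G : SimpleGraph V) (a : V → V → ℝ) (d : V → ℝ) (φ : ℝ) : Prop where
  pos : 0 < φ
  le1 : φ ≤ 1
  a1 : ∀ u v, G.Adj u v → a u v = 1
  a0 : ∀ u v, ¬ G.Adj u v → a u v = 0
  hd : ∀ v, d v = ∑ u, a v u
  hexp : ∀ X : Finset V, φ * min (∑ v ∈ X, d v) (∑ v ∈ Xᶜ, d v) ≤ ∑ v ∈ X, ∑ u ∈ Xᶜ, a v u

lemma ECtx.dnn {G : SimpleGraph V} {a : V → V → ℝ} {d : V → ℝ} {φ : ℝ} (E : ECtx G a d φ) (v : V) :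
    0 ≤ d v := by
  rw [E.hd]; refine Finset.sum_nonneg (fun u _ => ?_)
  by_cases hh : G.Adj v u
  · rw [E.a1 _ _ hh]; norm_num
  · rw [E.a0 _ _ hh]

lemma ECtx.reach {G : SimpleGraph V} {a : V → V → ℝ} {d : V → ℝ} {φ : ℝ} (E : ECtx G a d φ)
    (S : Finset V) (hS : ∑ v, d v ≤ 4 * ∑ v ∈ S, d v)
    (w : Sym2 V → ℝ) (hw : ∀ e, 0 ≤ w e) (Δ : ℝ) (hΔ : 0 ≤ Δ) (i : ℕ) :
    ∃ g : V → ℝ, (∀ v, 0 ≤ g v) ∧ (∀ v, g v ≤ Δ) ∧ (∀ v ∈ S, g v = 0) ∧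
      (∀ v, g v < Δ → ∃ s ∈ S, Rch G w i (g v) v s) ∧
      ∑ v, d v * g v ≤ (1 - φ / 3) ^ i * (Δ * ∑ v, d v) + 6 * (∑ e, w e) / φ := by
  have hp := E.pos
  have h1 := E.le1
  have := reach_aux G a d S (φ / 3) (by linarith) (by linarith) E.a1 E.a0 E.hd ?_ w hw Δ hΔ i
  · have e : 2 * (∑ e, w e) / (φ / 3) = 6 * (∑ e, w e) / φ := by field_simp; ring
    rw [e] at this
    exact this
  intro X hX
  have hx := E.hexp X
  have hsub : S ⊆ Xᶜ := by
    intro v hv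
    rw [Finset.mem_compl]
    exact Finset.disjoint_right.mp hX hv
  have hle : ∑ v ∈ S, d v ≤ ∑ v ∈ Xᶜ, d v :=
    Finset.sum_le_sum_of_subset_of_nonneg hsub (fun v _ _ => E.dnn v)
  have htot : ∑ v ∈ X, d v + ∑ v ∈ Xᶜ, d v = ∑ v, d v := Finset.sum_add_sum_compl X d
  have hX0 : 0 ≤ ∑ v ∈ X, d v := Finset.sum_nonneg (fun v _ => E.dnn v)
  have hm : (∑ v ∈ X, d v) / 3 ≤ min (∑ v ∈ X, d v) (∑ v ∈ Xᶜ, d v) :=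
    le_min (by linarith) (by linarith)
  have := mul_le_mul_of_nonneg_left hm hp.le
  linarith

lemma pow_bound {φ : ℝ} (hp : 0 < φ) (h1 : φ ≤ 1) (i : ℕ) (x : ℝ) (hx : 3 / φ * x ≤ i) :
    (1 - φ / 3) ^ i ≤ Real.exp (-x) := by
  have h2 : 1 - φ / 3 ≤ Real.exp (-(φ / 3)) := by
    have := Real.add_one_le_exp (-(φ / 3)); linarith
  calc (1 - φ / 3) ^ i ≤ (Real.exp (-(φ / 3))) ^ i := pow_le_pow_left₀ (by linarith) h2 i
    _ = Real.exp (i * (-(φ / 3))) := by rw [← Real.exp_nat_mul]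
    _ ≤ Real.exp (-x) := by
      apply Real.exp_le_exp.mpr
      have : φ / 3 * (3 / φ * x) ≤ φ / 3 * i := mul_le_mul_of_nonneg_left hx (by positivity)
      have e : φ / 3 * (3 / φ * x) = x := by field_simp
      linarith

lemma ECtx.grow {G : SimpleGraph V} {a : V → V → ℝ} {d : V → ℝ} {φ : ℝ} (E : ECtx G a d φ)
    (B : Finset V) (hB : ∑ v, d v ≤ 4 * ∑ v ∈ B, d v) (hD : 0 < ∑ v, d v)
    (w : Sym2 V → ℝ) (hw : ∀ e, 0 ≤ w e) (hW : 0 < ∑ e, w e) :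
    ∃ B' : Finset V, ∑ v, d v ≤ 2 * ∑ v ∈ B', d v ∧
      ∀ v ∈ B', ∃ s ∈ B, Rch G w ⌈6 / φ⌉₊ (48 * (∑ e, w e) / (φ * ∑ v, d v)) v s := by
  have hp := E.pos
  set W := ∑ e, w e with hWd
  set D := ∑ v, d v with hDd
  set Δ := 48 * W / (φ * D) with hΔd
  have hΔ : 0 < Δ := by positivity
  obtain ⟨g, g0, gΔ, gS, gR, gQ⟩ := E.reach B hB w hw Δ hΔ.le ⌈6 / φ⌉₊
  have hpow : (1 - φ / 3) ^ ⌈6 / φ⌉₊ ≤ 1 / 4 := by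
    refine (pow_bound hp E.le1 _ 2 ?_).trans ?_
    · have := Nat.le_ceil (6 / φ)
      have e : 3 / φ * 2 = 6 / φ := by ring
      linarith
    · rw [Real.exp_neg, one_div]
      apply inv_anti₀ (by norm_num)
      have := Real.add_one_le_exp (1 : ℝ)
      have e : Real.exp 2 = Real.exp 1 * Real.exp 1 := by rw [← Real.exp_add]; norm_num
      nlinarith
  refine ⟨Finset.univ.filter (fun v => g v < Δ), ?_, ?_⟩
  · have e1 : 6 * W / φ = Δ * D / 8 := by rw [hΔd]; field_simp; norm_num
    have e2 := mul_le_mul_of_nonneg_right hpow (mul_nonneg hΔ.le hD.le)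
    have hbad : Δ * ∑ v ∈ Finset.univ.filter (fun v => ¬ g v < Δ), d v ≤ ∑ v, d v * g v := by
      rw [Finset.mul_sum]
      calc _ ≤ ∑ v ∈ Finset.univ.filter (fun v => ¬ g v < Δ), d v * g v := by
            refine Finset.sum_le_sum (fun v hv => ?_)
            have h1 := not_lt.mp (Finset.mem_filter.1 hv).2
            have := mul_le_mul_of_nonneg_left h1 (E.dnn v)
            linarith
        _ ≤ _ := Finset.sum_le_sum_of_subset_of_nonneg (Finset.subset_univ _)
            (fun v _ _ => mul_nonneg (E.dnn v) (g0 v))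
    have hsplit := Finset.sum_filter_add_sum_filter_not Finset.univ (fun v => g v < Δ) d
    rw [← hDd] at hsplit
    have : Δ * ∑ v ∈ Finset.univ.filter (fun v => ¬ g v < Δ), d v ≤ Δ * (D * (3/8)) := by
      linarith
    have := le_of_mul_le_mul_left this hΔ
    linarith
  · intro v hv
    obtain ⟨s, hs, hR⟩ := gR v (Finset.mem_filter.1 hv).2
    exact ⟨s, hs, hR.mono le_rfl (gΔ v)⟩

lemma ECtx.center {G : SimpleGraph V} {a : V → V → ℝ} {d : V → ℝ} {φ : ℝ} (E : ECtx G a d φ)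
    (hD : 0 < ∑ v, d v) (w : Sym2 V → ℝ) (hw : ∀ e, 0 ≤ w e) (hW : 0 < ∑ e, w e) (k : ℕ) :
    ∀ (S B : Finset V) (L : ℕ) (R : ℝ), S.card ≤ 2 ^ k → ∑ v, d v ≤ 2 * ∑ v ∈ B, d v →
      (∀ v ∈ B, ∃ s ∈ S, Rch G w L R v s) →
      ∃ (o : V) (B' : Finset V), ∑ v, d v ≤ 2 * ∑ v ∈ B', d v ∧
        ∀ v ∈ B', Rch G w (L + k * ⌈6 / φ⌉₊) (R + k * (48 * (∑ e, w e) / (φ * ∑ v, d v))) v o := by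
  induction k with
  | zero =>
    intro S B L R hS hB hR
    have hBne : B.Nonempty := by
      by_contra hne
      rw [Finset.not_nonempty_iff_eq_empty] at hne
      rw [hne] at hB
      simp at hB; linarith
    obtain ⟨b, hb⟩ := hBne
    obtain ⟨o, ho, _⟩ := hR b hb
    refine ⟨o, B, hB, fun v hv => ?_⟩
    obtain ⟨s, hs, h⟩ := hR v hv
    have : s = o := Finset.card_le_one.mp (by simpa using hS) s hs o ho
    subst this
    simpa using h
  | succ k ih =>
    intro S B L R hS hB hR
    classical
    obtain ⟨S1, hS1, hc1⟩ := Finset.exists_subset_card_eq (s := S) (n := S.card / 2) (by omega)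
    have hc2 : (S \ S1).card = S.card - S.card / 2 := by
      rw [Finset.card_sdiff_of_subset hS1, hc1]
    have hpow : 2 ^ (k+1) = 2 * 2 ^ k := by ring
    have main : ∀ T : Finset V, T.card ≤ 2 ^ k →
        ∑ v, d v ≤ 4 * ∑ v ∈ B.filter (fun v => ∃ s ∈ T, Rch G w L R v s), d v →
        ∃ (o : V) (B' : Finset V), ∑ v, d v ≤ 2 * ∑ v ∈ B', d v ∧
        ∀ v ∈ B', Rch G w (L + (k+1 : ℕ) * ⌈6 / φ⌉₊) (R + (k+1 : ℕ) * (48 * (∑ e, w e) / (φ * ∑ v, d v))) v o := by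
      intro T hT hv
      obtain ⟨B', hB', hR'⟩ := E.grow _ hv hD w hw hW
      obtain ⟨o, B'', h1, h2⟩ := ih T B' (⌈6 / φ⌉₊ + L) (48 * (∑ e, w e) / (φ * ∑ v, d v) + R) hT hB' (by
        intro v hv
        obtain ⟨s, hs, h⟩ := hR' v hv
        obtain ⟨x, hx, h'⟩ := (Finset.mem_filter.1 hs).2
        exact ⟨x, hx, h.trans hw h'⟩)
      refine ⟨o, B'', h1, fun v hv => (h2 v hv).mono (le_of_eq ?_) (le_of_eq ?_)⟩
      · ring
      · push_cast; ring
    have hcov : ∑ v ∈ B, d v ≤ ∑ v ∈ B.filter (fun v => ∃ s ∈ S1, Rch G w L R v s), d v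
        + ∑ v ∈ B.filter (fun v => ∃ s ∈ S \ S1, Rch G w L R v s), d v := by
      rw [← Finset.sum_union_inter]
      have h0 : 0 ≤ ∑ v ∈ B.filter (fun v => ∃ s ∈ S1, Rch G w L R v s) ∩ B.filter (fun v => ∃ s ∈ S \ S1, Rch G w L R v s), d v :=
        Finset.sum_nonneg (fun v _ => E.dnn v)
      refine le_trans ?_ (le_add_of_nonneg_right h0)
      refine Finset.sum_le_sum_of_subset_of_nonneg ?_ (fun v _ _ => E.dnn v)
      intro v hv
      obtain ⟨s, hs, h⟩ := hR v hv
      rw [Finset.mem_union, Finset.mem_filter, Finset.mem_filter]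
      by_cases hs1 : s ∈ S1
      · exact Or.inl ⟨hv, s, hs1, h⟩
      · exact Or.inr ⟨hv, s, Finset.mem_sdiff.2 ⟨hs, hs1⟩, h⟩
    rcases le_total (∑ v, d v) (4 * ∑ v ∈ B.filter (fun v => ∃ s ∈ S1, Rch G w L R v s), d v) with hl | hl
    · exact main S1 (by omega) hl
    · exact main (S \ S1) (by omega) (by linarith)

lemma ECtx.route {G : SimpleGraph V} {a : V → V → ℝ} {d : V → ℝ} {φ : ℝ} (E : ECtx G a d φ)
    (F : ℝ) (hF : 0 < F) (hFd : ∀ v, F ≤ d v) (hd1 : ∀ v, 1 ≤ d v) (hV : 0 < Fintype.card V)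
    (w : Sym2 V → ℝ) (hw : ∀ e, 0 ≤ w e) (hW : 0 < ∑ e, w e) (k h0 : ℕ)
    (hk : Fintype.card V ≤ 2 ^ k) (hh0 : (1 - φ / 3) ^ h0 * ∑ v, d v ≤ 1 / 4) :
    ∃ P : ∀ u v, G.Walk u v, (∀ u v, (P u v).length ≤ 2 * (h0 + k * ⌈6 / φ⌉₊)) ∧
      ∑ u, ∑ v, wcost w (P u v) ≤ 2 * Fintype.card V * ((9 + 48 * k) * (∑ e, w e) / (φ * F)) := by
  have hp := E.pos
  have hDF : Fintype.card V * F ≤ ∑ v, d v := by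
    have := Finset.card_nsmul_le_sum Finset.univ d F (fun v _ => hFd v)
    simpa using this
  have hn : (0:ℝ) < Fintype.card V := by exact_mod_cast hV
  have hD : 0 < ∑ v, d v := lt_of_lt_of_le (by positivity) hDF
  obtain ⟨o, B, hB, hR⟩ := E.center hD w hw hW k Finset.univ Finset.univ 0 0 (by simpa using hk)
    (by linarith) (fun v _ => ⟨v, Finset.mem_univ v, SimpleGraph.Walk.nil, by simp, by simp [wcost]⟩)
  set W := ∑ e, w e with hWd
  set D := ∑ v, d v with hDd
  set Δ := 12 * W / φ with hΔd
  have hΔ : 0 < Δ := by positivity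
  obtain ⟨g, g0, gΔ, gS, gR, gQ⟩ := E.reach B (by linarith) w hw Δ hΔ.le h0
  have hQ : ∑ v, d v * g v ≤ 9 * W / φ := by
    have e1 : 6 * W / φ = Δ / 2 := by rw [hΔd]; ring
    have e2 : 9 * W / φ = Δ * (3 / 4) := by rw [hΔd]; ring
    have := mul_le_mul_of_nonneg_left hh0 hΔ.le
    rw [e2]
    rw [← hWd, e1] at gQ
    linarith
  have hlt : ∀ v, g v < Δ := by
    intro v
    have h1 : d v * g v ≤ ∑ v, d v * g v :=
      Finset.single_le_sum (f := fun v => d v * g v) (fun v _ => mul_nonneg (E.dnn v) (g0 v)) (Finset.mem_univ v)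
    have h2 := mul_le_mul_of_nonneg_right (hd1 v) (g0 v)
    have e2 : 9 * W / φ = Δ * (3 / 4) := by rw [hΔd]; ring
    linarith
  set c := (k : ℝ) * (48 * W / (φ * D)) with hc
  have hto : ∀ v, Rch G w (h0 + k * ⌈6 / φ⌉₊) (g v + c) v o := by
    intro v
    obtain ⟨s, hs, h⟩ := gR v (hlt v)
    have := h.trans hw (hR s hs)
    exact this.mono (by omega) (by linarith)
  choose p hp1 hp2 using hto
  refine ⟨fun u v => (p u).append (p v).reverse, ?_, ?_⟩
  · intro u v
    rw [SimpleGraph.Walk.length_append, SimpleGraph.Walk.length_reverse]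
    have := hp1 u
    have := hp1 v
    omega
  · have h1 : ∀ u v, wcost w ((p u).append (p v).reverse) ≤ (g u + c) + (g v + c) := by
      intro u v
      have := wcost_append w hw (p u) (p v).reverse
      rw [wcost_reverse] at this
      linarith [hp2 u, hp2 v]
    have h2 : ∑ u, ∑ v, wcost w ((p u).append (p v).reverse) ≤ ∑ u : V, ∑ v : V, ((g u + c) + (g v + c)) :=
      Finset.sum_le_sum (fun u _ => Finset.sum_le_sum (fun v _ => h1 u v))
    refine h2.trans ?_
    have h3 : ∑ u : V, ∑ v : V, ((g u + c) + (g v + c)) = 2 * Fintype.card V * (∑ v, g v + Fintype.card V * c) := by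
      simp only [Finset.sum_add_distrib, Finset.sum_const, Finset.card_univ, nsmul_eq_mul, ← Finset.mul_sum]
      ring
    rw [h3]
    refine mul_le_mul_of_nonneg_left ?_ (by positivity)
    have h4 : F * ∑ v, g v ≤ 9 * W / φ := by
      refine le_trans ?_ hQ
      rw [Finset.mul_sum]
      exact Finset.sum_le_sum (fun v _ => mul_le_mul_of_nonneg_right (hFd v) (g0 v))
    have h5 : ∑ v, g v ≤ 9 * W / (φ * F) := by
      rw [le_div_iff₀ (by positivity)]
      rw [le_div_iff₀ hp] at h4
      linarith
    have h6 : Fintype.card V * c ≤ 48 * k * W / (φ * F) := by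
      rw [hc, le_div_iff₀ (by positivity)]
      have : (Fintype.card V : ℝ) * (k * (48 * W / (φ * D))) * (φ * F) = 48 * k * W * ((Fintype.card V * F) / D) := by
        field_simp
      rw [this]
      have h7 : (Fintype.card V * F) / D ≤ 1 := by rw [div_le_one hD]; exact hDF
      have : 0 ≤ 48 * k * W := by positivity
      nlinarith
    have e : (9 + 48 * k) * W / (φ * F) = 9 * W / (φ * F) + 48 * k * W / (φ * F) := by ring
    linarith

lemma potential_aux {τ ι : Type} [Fintype ι] (Good : τ → Prop) (X : ι → τ → ℝ) (α β : ι → ℝ)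
    (hβ : ∀ j, 0 < β j)
    (hstep : ∀ q : ι → ℝ, (∀ j, 0 < q j) →
      ∃ p, Good p ∧ ∑ j, q j * Real.exp (X j p - α j) ≤ ∑ j, q j) (T : ℕ) :
    ∃ ω : Fin T → τ, (∀ i, Good (ω i)) ∧
      ∑ j, β j * Real.exp (∑ i, X j (ω i) - T * α j) ≤ ∑ j, β j := by
  induction T with
  | zero => exact ⟨fun i => i.elim0, fun i => i.elim0, by simp⟩
  | succ T ih =>
    obtain ⟨ω, hω, hM⟩ := ih
    obtain ⟨p, hp, hq⟩ := hstep (fun j => β j * Real.exp (∑ i, X j (ω i) - T * α j))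
      (fun j => mul_pos (hβ j) (Real.exp_pos _))
    refine ⟨Fin.cons p ω, ?_, ?_⟩
    · intro i
      refine Fin.cases ?_ ?_ i
      · simpa using hp
      · intro i; simpa using hω i
    · refine le_trans (le_of_eq ?_) (hq.trans hM)
      refine Finset.sum_congr rfl (fun j _ => ?_)
      rw [mul_assoc, ← Real.exp_add, Fin.sum_univ_succ]
      simp only [Fin.cons_zero, Fin.cons_succ]
      congr 2
      push_cast
      ring

/-- routed path data: start, end, edge set -/
abbrev RP (V : Type) := V × V × Finset (Sym2 V)

/-- index set of the potential function -/
abbrev PI (V : Type) [Fintype V] := Sym2 V ⊕ V ⊕ {S : Finset V // 2 * S.card ≤ Fintype.card V}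

/-- the increments -/
def PX : PI V → RP V → ℝ
  | .inl e, p => if e ∈ p.2.2 then 1 else 0
  | .inr (.inl v), p => if p.1 = v then 1 else 0
  | .inr (.inr S), p => - (if p.1 ∈ S.1 ∧ p.2.1 ∉ S.1 then 1 else 0)

/-- the drifts -/
noncomputable def Pα (κ : ℝ) : PI V → ℝ
  | .inl _ => κ
  | .inr (.inl _) => 2 / (Fintype.card V : ℝ)
  | .inr (.inr S) => - ((S.1.card : ℝ) / (4 * Fintype.card V))

/-- the initial weights -/
noncomputable def Pβ : PI V → ℝ
  | .inl _ => 1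
  | .inr (.inl _) => 1
  | .inr (.inr S) => (1 / (Fintype.card V : ℝ)) ^ S.1.card

lemma exp_ind_le (P : Prop) [Decidable P] :
    Real.exp (if P then 1 else 0) ≤ 1 + 2 * (if P then 1 else 0) := by
  split_ifs
  · have := Real.exp_one_lt_d9; linarith
  · simp

lemma exp_neg_ind_le (P : Prop) [Decidable P] :
    Real.exp (-(if P then 1 else 0)) ≤ 1 - (1 / 2) * (if P then 1 else 0) := by
  split_ifs
  · rw [Real.exp_neg]
    have := Real.add_one_le_exp (1 : ℝ)
    have : (Real.exp 1)⁻¹ ≤ 2⁻¹ := inv_anti₀ (by norm_num) (by linarith)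
    linarith
  · simp

lemma step_vertex (v : V) (hV : 0 < Fintype.card V) :
    ∑ x : V, ∑ _y : V, Real.exp ((if x = v then 1 else 0) - 2 / (Fintype.card V : ℝ))
      ≤ (Fintype.card V : ℝ) ^ 2 := by
  set n := (Fintype.card V : ℝ) with hn
  have hn0 : 0 < n := by rw [hn]; exact_mod_cast hV
  have h1 : ∑ x : V, ∑ _y : V, Real.exp ((if x = v then 1 else 0) - 2 / n)
      ≤ ∑ x : V, ∑ _y : V, Real.exp (-(2 / n)) * (1 + 2 * (if x = v then 1 else 0)) := by
    refine Finset.sum_le_sum (fun x _ => Finset.sum_le_sum (fun y _ => ?_))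
    rw [sub_eq_add_neg, add_comm, Real.exp_add]
    exact mul_le_mul_of_nonneg_left (exp_ind_le _) (Real.exp_pos _).le
  refine h1.trans ?_
  have h2 : ∑ x : V, ∑ _y : V, Real.exp (-(2 / n)) * (1 + 2 * (if x = v then (1:ℝ) else 0))
      = n ^ 2 * (Real.exp (-(2 / n)) * (1 + 2 / n)) := by
    simp only [Finset.sum_const, Finset.card_univ, nsmul_eq_mul, ← Finset.mul_sum,
      Finset.sum_add_distrib, Finset.sum_ite_eq', Finset.mem_univ, if_true, ← hn]
    field_simp
  rw [h2]
  have h3 : Real.exp (-(2 / n)) * (1 + 2 / n) ≤ 1 := by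
    calc _ ≤ Real.exp (-(2 / n)) * Real.exp (2 / n) :=
          mul_le_mul_of_nonneg_left (by linarith [Real.add_one_le_exp (2 / n)]) (Real.exp_pos _).le
      _ = 1 := by rw [← Real.exp_add]; simp
  nlinarith [sq_nonneg n]

lemma step_cut (S : Finset V) (hS : 2 * S.card ≤ Fintype.card V) (hV : 0 < Fintype.card V) :
    ∑ x : V, ∑ y : V, Real.exp (-(if x ∈ S ∧ y ∉ S then 1 else 0) - -((S.card : ℝ) / (4 * Fintype.card V)))
      ≤ (Fintype.card V : ℝ) ^ 2 := by
  set n := (Fintype.card V : ℝ) with hn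
  set s := (S.card : ℝ) with hs
  have hn0 : 0 < n := by rw [hn]; exact_mod_cast hV
  have hs0 : 0 ≤ s := by rw [hs]; positivity
  have hsn : 2 * s ≤ n := by rw [hn, hs]; exact_mod_cast hS
  have h1 : ∑ x : V, ∑ y : V, Real.exp (-(if x ∈ S ∧ y ∉ S then 1 else 0) - -(s / (4 * n)))
      ≤ ∑ x : V, ∑ y : V, Real.exp (s / (4 * n)) * (1 - 1 / 2 * (if x ∈ S ∧ y ∉ S then 1 else 0)) := by
    refine Finset.sum_le_sum (fun x _ => Finset.sum_le_sum (fun y _ => ?_))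
    rw [sub_neg_eq_add, add_comm, Real.exp_add]
    exact mul_le_mul_of_nonneg_left (exp_neg_ind_le _) (Real.exp_pos _).le
  refine h1.trans ?_
  have hc : ∑ x : V, ∑ y : V, (if x ∈ S ∧ y ∉ S then (1:ℝ) else 0) = s * (n - s) := by
    have b : ∀ x y, (if x ∈ S ∧ y ∉ S then (1:ℝ) else 0) = (if x ∈ S then 1 else 0) * (1 - if y ∈ S then 1 else 0) := by
      intro x y
      by_cases hx : x ∈ S <;> by_cases hy : y ∈ S <;> simp [hx, hy]
    simp only [b, ← Finset.mul_sum, ← Finset.sum_mul, Finset.sum_sub_distrib]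
    simp [hs, hn]
  have h2 : ∑ x : V, ∑ y : V, Real.exp (s / (4 * n)) * (1 - 1 / 2 * (if x ∈ S ∧ y ∉ S then (1:ℝ) else 0))
      = Real.exp (s / (4 * n)) * (n ^ 2 - 1 / 2 * (s * (n - s))) := by
    simp only [← Finset.mul_sum, Finset.sum_sub_distrib, hc]
    simp [← hn]; ring
  rw [h2]
  have h4 : n ^ 2 - 1 / 2 * (s * (n - s)) ≤ n ^ 2 * (1 - s / (4 * n)) := by
    have : n ^ 2 * (1 - s / (4 * n)) = n ^ 2 - n * s / 4 := by field_simp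
    rw [this]; nlinarith
  have h3 : Real.exp (s / (4 * n)) * (1 - s / (4 * n)) ≤ 1 := by
    calc _ ≤ Real.exp (s / (4 * n)) * Real.exp (-(s / (4 * n))) :=
          mul_le_mul_of_nonneg_left (by linarith [Real.add_one_le_exp (-(s / (4 * n)))]) (Real.exp_pos _).le
      _ = 1 := by rw [← Real.exp_add]; simp
  have h5 := mul_le_mul_of_nonneg_left h4 (Real.exp_pos (s / (4 * n))).le
  nlinarith [sq_nonneg n]

lemma step_edge (F : V → V → Finset (Sym2 V)) (q : Sym2 V → ℝ) (κ : ℝ)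
    (hF : 2 * ∑ x, ∑ y, ∑ e ∈ F x y, q e ≤ (Fintype.card V : ℝ) ^ 2 * (κ * ∑ e, q e))
    (hq : ∀ e, 0 ≤ q e) :
    ∑ x : V, ∑ y : V, ∑ e, q e * Real.exp ((if e ∈ F x y then 1 else 0) - κ)
      ≤ (Fintype.card V : ℝ) ^ 2 * ∑ e, q e := by
  set n := (Fintype.card V : ℝ) with hn
  have h1 : ∑ x : V, ∑ y : V, ∑ e, q e * Real.exp ((if e ∈ F x y then 1 else 0) - κ)
      ≤ ∑ x : V, ∑ y : V, Real.exp (-κ) * (∑ e, q e + 2 * ∑ e ∈ F x y, q e) := by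
    refine Finset.sum_le_sum (fun x _ => Finset.sum_le_sum (fun y _ => ?_))
    have : ∑ e ∈ F x y, q e = ∑ e, q e * (if e ∈ F x y then 1 else 0) := by
      simp [Finset.sum_ite_mem]
    rw [this, Finset.mul_sum, ← Finset.sum_add_distrib, Finset.mul_sum]
    refine Finset.sum_le_sum (fun e _ => ?_)
    rw [sub_eq_add_neg, add_comm, Real.exp_add]
    have := mul_le_mul_of_nonneg_left (exp_ind_le (e ∈ F x y)) (mul_nonneg (hq e) (Real.exp_pos (-κ)).le)
    nlinarith
  refine h1.trans ?_
  have h2 : ∑ x : V, ∑ y : V, Real.exp (-κ) * (∑ e, q e + 2 * ∑ e ∈ F x y, q e)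
      = Real.exp (-κ) * (n ^ 2 * ∑ e, q e + 2 * ∑ x, ∑ y, ∑ e ∈ F x y, q e) := by
    simp only [← Finset.mul_sum, Finset.sum_add_distrib, Finset.sum_const, Finset.card_univ, nsmul_eq_mul, ← hn]
    ring
  rw [h2]
  have hW : 0 ≤ ∑ e, q e := Finset.sum_nonneg (fun e _ => hq e)
  have h3 : Real.exp (-κ) * (1 + κ) ≤ 1 := by
    calc _ ≤ Real.exp (-κ) * Real.exp κ :=
          mul_le_mul_of_nonneg_left (by linarith [Real.add_one_le_exp κ]) (Real.exp_pos _).le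
      _ = 1 := by rw [← Real.exp_add]; simp
  calc _ ≤ Real.exp (-κ) * (n ^ 2 * ∑ e, q e + n ^ 2 * (κ * ∑ e, q e)) :=
        mul_le_mul_of_nonneg_left (by linarith) (Real.exp_pos _).le
    _ = (Real.exp (-κ) * (1 + κ)) * (n ^ 2 * ∑ e, q e) := by ring
    _ ≤ 1 * (n ^ 2 * ∑ e, q e) := mul_le_mul_of_nonneg_right h3 (by positivity)
    _ = _ := one_mul _

lemma sum_beta_le (hV : 3 ≤ Fintype.card V) :
    ∑ j, Pβ (V := V) j ≤ (Fintype.card V : ℝ) ^ 3 := by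
  set n := (Fintype.card V : ℝ) with hn
  have hn3 : 3 ≤ n := by rw [hn]; exact_mod_cast hV
  rw [Fintype.sum_sum_type, Fintype.sum_sum_type]
  simp only [Pβ, ← hn]
  have h1 : ∑ _e : Sym2 V, (1:ℝ) ≤ n ^ 2 := by
    have : Fintype.card (Sym2 V) ≤ Fintype.card (V × V) :=
      Fintype.card_le_of_surjective (fun p : V × V => s(p.1, p.2)) (by
        intro e; induction e with | h x y => exact ⟨(x, y), rfl⟩)
    rw [Fintype.card_prod] at this
    simp only [Finset.sum_const, Finset.card_univ, nsmul_eq_mul, mul_one]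
    rw [hn, pow_two]; exact_mod_cast this
  have h2 : ∑ _v : V, (1:ℝ) = n := by simp [hn]
  have h3 : ∑ S : {S : Finset V // 2 * S.card ≤ Fintype.card V}, (1 / n) ^ S.1.card ≤ 3 := by
    have a1 : ∑ S : {S : Finset V // 2 * S.card ≤ Fintype.card V}, (1 / n) ^ S.1.card
        ≤ ∑ S : Finset V, (1 / n) ^ S.card := by
      rw [← Finset.sum_subtype (p := fun S : Finset V => 2 * S.card ≤ Fintype.card V)
        (Finset.univ.filter (fun S : Finset V => 2 * S.card ≤ Fintype.card V))
        (by intro S; simp) (fun S : Finset V => (1 / n) ^ S.card)]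
      exact Finset.sum_le_sum_of_subset_of_nonneg (Finset.subset_univ _)
        (fun S _ _ => by positivity)
    have a2 : ∑ S : Finset V, (1 / n) ^ S.card = (1 / n + 1) ^ Fintype.card V := by
      have := Fintype.sum_pow_mul_eq_add_pow V (1 / n) (1 : ℝ)
      simpa using this
    have a3 : (1 / n + 1) ^ Fintype.card V ≤ Real.exp 1 := by
      calc (1 / n + 1) ^ Fintype.card V ≤ (Real.exp (1 / n)) ^ Fintype.card V :=
            pow_le_pow_left₀ (by positivity) (Real.add_one_le_exp _) _
        _ = Real.exp 1 := by
            rw [← Real.exp_nat_mul, ← hn]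
            congr 1; field_simp
    have := Real.exp_one_lt_d9
    linarith
  nlinarith

lemma ECtx.sample {G : SimpleGraph V} {a : V → V → ℝ} {d : V → ℝ} {φ : ℝ} (E : ECtx G a d φ)
    (f : ℕ) (hF : 0 < f) (hFd : ∀ v, (f : ℝ) ≤ d v) (hV : 3 ≤ Fintype.card V) (k h0 : ℕ)
    (hk : Fintype.card V ≤ 2 ^ k) (hh0 : (1 - φ / 3) ^ h0 * ∑ v, d v ≤ 1 / 4) :
    ∃ ω : Fin (f * Fintype.card V) → RP V,
      (∀ i, ∃ p : G.Walk (ω i).1 (ω i).2.1, p.length ≤ 2 * (h0 + k * ⌈6 / φ⌉₊) ∧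
        (ω i).2.2 = p.edges.toFinset) ∧
      (∀ e, ∑ i, (if e ∈ (ω i).2.2 then (1:ℝ) else 0)
        ≤ 4 * (9 + 48 * k) / φ + 3 * Real.log (Fintype.card V)) ∧
      (∀ v, ∑ i, (if (ω i).1 = v then (1:ℝ) else 0) ≤ 2 * f + 3 * Real.log (Fintype.card V)) ∧
      (∀ S : Finset V, 2 * S.card ≤ Fintype.card V →
        f * S.card / 4 - S.card * Real.log (Fintype.card V) - 3 * Real.log (Fintype.card V)
          ≤ ∑ i, (if (ω i).1 ∈ S ∧ (ω i).2.1 ∉ S then (1:ℝ) else 0)) := by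
  have hp := E.pos
  set n := (Fintype.card V : ℝ) with hn
  have hn3 : 3 ≤ n := by rw [hn]; exact_mod_cast hV
  have hn0 : 0 < n := by linarith
  have hf0 : (0:ℝ) < f := by exact_mod_cast hF
  have hf1 : (1:ℝ) ≤ f := by exact_mod_cast hF
  set κ : ℝ := 4 * (9 + 48 * k) / (n * φ * f) with hκ
  obtain ⟨ω, hω, hM⟩ := potential_aux
    (fun r : RP V => ∃ p : G.Walk r.1 r.2.1, p.length ≤ 2 * (h0 + k * ⌈6 / φ⌉₊) ∧
        r.2.2 = p.edges.toFinset) (PX (V := V)) (Pα κ) Pβ (by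
      intro j
      rcases j with e | v | S
      · exact one_pos
      · exact one_pos
      · simp only [Pβ]; positivity) (by
      intro q hq
      have hVpos : 0 < Fintype.card V := by omega
      have : Nonempty V := Fintype.card_pos_iff.mp hVpos
      have hWpos : 0 < ∑ e : Sym2 V, q (.inl e) := by
        refine Finset.sum_pos (fun e _ => hq _) ?_
        obtain ⟨v⟩ := this
        exact ⟨s(v, v), Finset.mem_univ _⟩
      obtain ⟨P, hP1, hP2⟩ := E.route f hf0 hFd (fun v => hf1.trans (hFd v)) hVpos
        (fun e => q (.inl e)) (fun e => (hq _).le) hWpos k h0 hk hh0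
      have hE := step_edge (fun x y => (P x y).edges.toFinset) (fun e => q (.inl e)) κ (by
        rw [← hn]
        have e1 : n ^ 2 * (κ * ∑ e : Sym2 V, q (.inl e)) = 2 * (2 * n * ((9 + 48 * k) * (∑ e : Sym2 V, q (.inl e)) / (φ * f))) := by
          rw [hκ]; field_simp; norm_num
        rw [e1]
        exact mul_le_mul_of_nonneg_left hP2 (by norm_num)) (fun e => (hq _).le)
      have havg : ∑ z : V × V, ∑ j, q j * Real.exp (PX j (z.1, z.2, (P z.1 z.2).edges.toFinset) - Pα κ j)
          ≤ ∑ z : V × V, ∑ j, q j := by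
        rw [Finset.sum_const, Finset.card_univ, Fintype.card_prod, nsmul_eq_mul]
        rw [Fintype.sum_prod_type]
        simp only [Fintype.sum_sum_type, Finset.sum_add_distrib, PX, Pα]
        push_cast
        rw [← hn, ← pow_two, mul_add, mul_add]
        refine add_le_add hE (add_le_add ?_ ?_)
        · have : ∀ x : V, ∑ y : V, ∑ v : V, q (.inr (.inl v)) * Real.exp ((if x = v then 1 else 0) - 2 / n)
              = ∑ v : V, ∑ y : V, q (.inr (.inl v)) * Real.exp ((if x = v then 1 else 0) - 2 / n) := fun x => Finset.sum_comm
          simp only [this]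
          rw [Finset.sum_comm, Finset.mul_sum]
          refine Finset.sum_le_sum (fun v _ => ?_)
          simp only [← Finset.mul_sum]
          rw [mul_comm (n ^ 2)]
          exact mul_le_mul_of_nonneg_left (step_vertex v hVpos) (hq _).le
        · have : ∀ x : V, ∑ y : V, ∑ S : {S : Finset V // 2 * S.card ≤ Fintype.card V}, q (.inr (.inr S)) * Real.exp (-(if x ∈ S.1 ∧ y ∉ S.1 then 1 else 0) - -((S.1.card : ℝ) / (4 * n)))
              = ∑ S : {S : Finset V // 2 * S.card ≤ Fintype.card V}, ∑ y : V, q (.inr (.inr S)) * Real.exp (-(if x ∈ S.1 ∧ y ∉ S.1 then 1 else 0) - -((S.1.card : ℝ) / (4 * n))) := fun x => Finset.sum_comm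
          simp only [this]
          rw [Finset.sum_comm, Finset.mul_sum]
          refine Finset.sum_le_sum (fun S _ => ?_)
          simp only [← Finset.mul_sum]
          rw [mul_comm (n ^ 2)]
          exact mul_le_mul_of_nonneg_left (step_cut S.1 S.2 hVpos) (hq _).le
      obtain ⟨z, _, hz⟩ := Finset.exists_le_of_sum_le (s := (Finset.univ : Finset (V × V))) Finset.univ_nonempty havg
      exact ⟨(z.1, z.2, (P z.1 z.2).edges.toFinset), ⟨P z.1 z.2, hP1 _ _, rfl⟩, hz⟩) (f * Fintype.card V)
  refine ⟨ω, hω, ?_⟩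
  have hβ : ∀ j, 0 < Pβ (V := V) j := by
    intro j
    rcases j with e | v | S
    · exact one_pos
    · exact one_pos
    · simp only [Pβ]; positivity
  have hT : ((f * Fintype.card V : ℕ) : ℝ) = f * n := by push_cast; rw [hn]
  have hj : ∀ j, Real.log (Pβ (V := V) j) + (∑ i, PX j (ω i) - f * n * Pα κ j) ≤ 3 * Real.log n := by
    intro j
    have h1 := Finset.single_le_sum (s := Finset.univ)
      (f := fun j => Pβ j * Real.exp (∑ i, PX j (ω i) - (f * Fintype.card V : ℕ) * Pα κ j))
      (fun j _ => (mul_pos (hβ j) (Real.exp_pos _)).le) (Finset.mem_univ j)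
    have h2 := (h1.trans hM).trans (sum_beta_le hV)
    simp only [hT] at h2
    have h3 := Real.log_le_log (mul_pos (hβ j) (Real.exp_pos _)) h2
    rw [Real.log_mul (hβ j).ne' (Real.exp_pos _).ne', Real.log_exp, Real.log_pow] at h3
    exact_mod_cast h3
  refine ⟨fun e => ?_, fun v => ?_, fun S hS => ?_⟩
  · have := hj (.inl e)
    simp only [Pβ, PX, Pα, Real.log_one] at this
    have e1 : f * n * κ = 4 * (9 + 48 * k) / φ := by rw [hκ]; field_simp
    linarith
  · have := hj (.inr (.inl v))
    simp only [Pβ, PX, Pα, Real.log_one] at this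
    have e1 : f * n * (2 / n) = 2 * f := by field_simp
    rw [← hn, e1] at this
    linarith
  · have := hj (.inr (.inr ⟨S, hS⟩))
    simp only [Pβ, PX, Pα, Real.log_pow, Finset.sum_neg_distrib] at this
    rw [← hn] at this
    have e1 : f * n * -((S.card : ℝ) / (4 * n)) = - (f * S.card / 4) := by field_simp
    rw [e1, one_div, Real.log_inv] at this
    linarith

/-- union of the routed edge sets -/
def RH {T : ℕ} (ω : Fin T → RP V) : SimpleGraph V :=
  SimpleGraph.fromEdgeSet {e | ∃ i, e ∈ (ω i).2.2}

lemma RH_edge {G : SimpleGraph V} {T : ℕ} (ω : Fin T → RP V)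
    (hω : ∀ i, ∃ p : G.Walk (ω i).1 (ω i).2.1, (ω i).2.2 = p.edges.toFinset) :
    (RH ω).edgeSet = {e | ∃ i, e ∈ (ω i).2.2} ∧ RH ω ≤ G := by
  have hG : ∀ e, (∃ i, e ∈ (ω i).2.2) → e ∈ G.edgeSet := by
    rintro e ⟨i, hi⟩
    obtain ⟨p, hp⟩ := hω i
    rw [hp, List.mem_toFinset] at hi
    exact p.edges_subset_edgeSet hi
  have h1 : (RH ω).edgeSet = {e | ∃ i, e ∈ (ω i).2.2} := by
    unfold RH
    rw [SimpleGraph.edgeSet_fromEdgeSet]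
    ext e
    simp only [Set.mem_sdiff, Set.mem_ofPred_eq]
    refine ⟨fun h => h.1, fun h => ⟨h, fun hd => ?_⟩⟩
    exact G.not_isDiag_of_mem_edgeSet (hG e h) hd
  refine ⟨h1, ?_⟩
  rw [← SimpleGraph.edgeSet_subset_edgeSet, h1]
  exact hG

lemma deg_le {H : SimpleGraph V} {T : ℕ} (ω : Fin T → RP V)
    (hH : H.edgeSet = {e | ∃ i, e ∈ (ω i).2.2}) (v : V) :
    (H.neighborSet v).ncard ≤ ∑ i, ((ω i).2.2.filter (fun e => v ∈ e)).card := by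
  have h1 : ((fun u => s(v, u)) '' H.neighborSet v).ncard = (H.neighborSet v).ncard :=
    Set.ncard_image_of_injective _ (fun x y h => Sym2.congr_right.1 h)
  have h2 : (fun u => s(v, u)) '' H.neighborSet v ⊆
      ((Finset.univ.biUnion (fun i => (ω i).2.2.filter (fun e => v ∈ e)) : Finset (Sym2 V)) : Set (Sym2 V)) := by
    rintro _ ⟨u, hu, rfl⟩
    have : s(v, u) ∈ H.edgeSet := hu
    rw [hH] at this
    obtain ⟨i, hi⟩ := this
    simp only [Finset.coe_biUnion, Set.mem_iUnion]
    exact ⟨i, by simp, by simpa using hi⟩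
  rw [← h1]
  refine (Set.ncard_le_ncard h2 (Finset.finite_toSet _)).trans ?_
  rw [Set.ncard_coe_finset]
  exact Finset.card_biUnion_le

lemma two_ends (S : Finset V) (F : Finset (Sym2 V)) :
    ∑ v ∈ S, (F.filter (fun e => v ∈ e)).card ≤ 2 * F.card := by
  simp only [Finset.card_filter]
  rw [Finset.sum_comm, mul_comm, ← smul_eq_mul]
  refine Finset.sum_le_card_nsmul _ _ _ (fun e _ => ?_)
  rw [← Finset.card_filter]
  induction e with | h x y => ?_
  have : S.filter (fun v => v ∈ s(x, y)) ⊆ {x, y} := by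
    intro v hv
    have := (Finset.mem_filter.1 hv).2
    simpa using this
  exact (Finset.card_le_card this).trans Finset.card_le_two

lemma touch_cross {G H : SimpleGraph V} {T : ℕ} (ω : Fin T → RP V)
    (hH : H.edgeSet = {e | ∃ i, e ∈ (ω i).2.2}) (i : Fin T) (x v : V) (p : G.Walk x v)
    (hp : ∀ e ∈ p.edges, e ∈ (ω i).2.2) (S : Finset V)
    (h : (x ∈ S ∧ v ∉ S) ∨ (x ∉ S ∧ v ∈ S)) :
    ∃ e ∈ (ω i).2.2, e ∈ edgeBoundary H S := by
  have hfin : ∀ d ∈ p.darts, (d.fst ∈ S ∧ d.snd ∉ S) ∨ (d.fst ∉ S ∧ d.snd ∈ S) →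
      ∃ e ∈ (ω i).2.2, e ∈ edgeBoundary H S := by
    intro d hd hh
    have he : d.edge ∈ (ω i).2.2 := hp _ (List.mem_map_of_mem hd)
    have hE : d.edge ∈ H.edgeSet := by rw [hH]; exact ⟨i, he⟩
    refine ⟨d.edge, he, hE, ?_⟩
    rcases hh with ⟨h1, h2⟩ | ⟨h1, h2⟩
    · exact ⟨d.fst, d.snd, rfl, h1, h2⟩
    · exact ⟨d.snd, d.fst, Sym2.eq_swap, h2, h1⟩
  rcases h with ⟨h1, h2⟩ | ⟨h1, h2⟩
  · obtain ⟨d, hd, h3, h4⟩ := p.exists_boundary_dart (S : Set V) (by simpa using h1) (by simpa using h2)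
    exact hfin d hd (Or.inl ⟨by simpa using h3, by simpa using h4⟩)
  · obtain ⟨d, hd, h3, h4⟩ := p.exists_boundary_dart ((S : Set V)ᶜ) (by simpa using h1) (by simpa using h2)
    exact hfin d hd (Or.inr ⟨by simpa using h3, by simpa using h4⟩)

lemma build {G : SimpleGraph V} {T : ℕ} (ω : Fin T → RP V) (L : ℕ) (κ F : ℝ)
    (hω : ∀ i, ∃ p : G.Walk (ω i).1 (ω i).2.1, p.length ≤ L ∧ (ω i).2.2 = p.edges.toFinset)
    (hc : ∀ e, ∑ i, (if e ∈ (ω i).2.2 then (1:ℝ) else 0) ≤ κ)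
    (hv : ∀ v, ∑ i, (if (ω i).1 = v then (1:ℝ) else 0) ≤ 3 * F)
    (hS : ∀ S : Finset V, S.Nonempty → 2 * S.card ≤ Fintype.card V →
        F * S.card / 8 ≤ ∑ i, (if (ω i).1 ∈ S ∧ (ω i).2.1 ∉ S then (1:ℝ) else 0)) :
    ∃ H : SimpleGraph V, H ≤ G ∧ (H.edgeSet.ncard : ℝ) ≤ T * L ∧
      ∀ S : Finset V, S.Nonempty → 2 * S.card ≤ Fintype.card V →
        F * S.card / 8 ≤ κ * (edgeBoundary H S).ncard ∧
        (vol H S : ℝ) ≤ 50 * L * κ * (edgeBoundary H S).ncard := by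
  classical
  obtain ⟨hH, hle⟩ := RH_edge (G := G) ω (fun i => by obtain ⟨p, _, h⟩ := hω i; exact ⟨p, h⟩)
  set H := RH ω with hHd
  have hcardF : ∀ i, (ω i).2.2.card ≤ L := by
    intro i
    obtain ⟨p, h1, h2⟩ := hω i
    rw [h2]
    refine (List.toFinset_card_le _).trans ?_
    rw [SimpleGraph.Walk.length_edges]; exact h1
  refine ⟨H, hle, ?_, ?_⟩
  · have h1 : H.edgeSet = ((Finset.univ.biUnion (fun i => (ω i).2.2) : Finset (Sym2 V)) : Set (Sym2 V)) := by
      rw [hH]; ext e; simp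
    rw [h1, Set.ncard_coe_finset]
    have h2 : (Finset.univ.biUnion (fun i => (ω i).2.2)).card ≤ T * L := by
      refine Finset.card_biUnion_le.trans ?_
      have := Finset.sum_le_card_nsmul (Finset.univ : Finset (Fin T)) (fun i => (ω i).2.2.card) L (fun i _ => hcardF i)
      simpa using this
    exact_mod_cast h2
  · intro S hSne hS2
    set D := Finset.univ.filter (fun e => e ∈ edgeBoundary H S) with hD
    have hDcard : (edgeBoundary H S).ncard = D.card := by
      rw [← Set.ncard_coe_finset]; congr 1; ext e; simp [hD]
    set N := ∑ i, (if ∃ e ∈ (ω i).2.2, e ∈ edgeBoundary H S then (1:ℝ) else 0) with hN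
    have hNκ : N ≤ κ * (edgeBoundary H S).ncard := by
      rw [hDcard]
      have h1 : N ≤ ∑ i, ∑ e ∈ D, (if e ∈ (ω i).2.2 then (1:ℝ) else 0) := by
        refine Finset.sum_le_sum (fun i _ => ?_)
        split_ifs with hi
        · obtain ⟨e, he1, he2⟩ := hi
          have := Finset.single_le_sum (s := D) (f := fun e => if e ∈ (ω i).2.2 then (1:ℝ) else 0)
            (fun e _ => by positivity) (a := e) (by simpa [hD] using he2)
          simpa [he1] using this
        · exact Finset.sum_nonneg (fun e _ => by positivity)
      refine h1.trans ?_
      rw [Finset.sum_comm]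
      have := Finset.sum_le_card_nsmul D (fun e => ∑ i, (if e ∈ (ω i).2.2 then (1:ℝ) else 0)) κ (fun e _ => hc e)
      rw [nsmul_eq_mul] at this
      linarith
    have hcross : ∑ i, (if (ω i).1 ∈ S ∧ (ω i).2.1 ∉ S then (1:ℝ) else 0) ≤ N := by
      refine Finset.sum_le_sum (fun i _ => ?_)
      by_cases hi : (ω i).1 ∈ S ∧ (ω i).2.1 ∉ S
      · obtain ⟨p, h1, h2⟩ := hω i
        have := touch_cross ω hH i _ _ p (fun e he => by rw [h2]; simpa using he) S (Or.inl hi)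
        rw [if_pos hi, if_pos this]
      · rw [if_neg hi]; positivity
    have hA := hS S hSne hS2
    refine ⟨by linarith, ?_⟩
    have hstart : ∑ i, (if (ω i).1 ∈ S then (1:ℝ) else 0) ≤ 3 * F * S.card := by
      have h1 : ∀ i, (if (ω i).1 ∈ S then (1:ℝ) else 0) = ∑ v ∈ S, (if (ω i).1 = v then (1:ℝ) else 0) := by
        intro i; simp
      simp only [h1]
      rw [Finset.sum_comm]
      have := Finset.sum_le_card_nsmul S (fun v => ∑ i, (if (ω i).1 = v then (1:ℝ) else 0)) (3 * F) (fun v _ => hv v)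
      rw [nsmul_eq_mul] at this
      linarith
    have hvol : (vol H S : ℝ) ≤ 2 * L * (N + ∑ i, (if (ω i).1 ∈ S then (1:ℝ) else 0)) := by
      have h1 : vol H S ≤ ∑ i, ∑ v ∈ S, ((ω i).2.2.filter (fun e => v ∈ e)).card := by
        unfold vol
        rw [Finset.sum_comm]
        exact Finset.sum_le_sum (fun v _ => deg_le ω hH v)
      have h2 : (vol H S : ℝ) ≤ ∑ i, ((∑ v ∈ S, ((ω i).2.2.filter (fun e => v ∈ e)).card : ℕ) : ℝ) := by
        exact_mod_cast h1
      refine h2.trans ?_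
      rw [hN, ← Finset.sum_add_distrib, Finset.mul_sum]
      refine Finset.sum_le_sum (fun i _ => ?_)
      have hb : ((∑ v ∈ S, ((ω i).2.2.filter (fun e => v ∈ e)).card : ℕ) : ℝ) ≤ 2 * L := by
        exact_mod_cast (two_ends S (ω i).2.2).trans (Nat.mul_le_mul_left 2 (hcardF i))
      have hL : (0:ℝ) ≤ 2 * L := by positivity
      by_cases hx : (ω i).1 ∈ S
      · rw [if_pos hx]
        have : (0:ℝ) ≤ (if ∃ e ∈ (ω i).2.2, e ∈ edgeBoundary H S then (1:ℝ) else 0) := by positivity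
        nlinarith
      · by_cases hcr : ∃ e ∈ (ω i).2.2, e ∈ edgeBoundary H S
        · rw [if_pos hcr, if_neg hx]; linarith
        · have h0 : ∑ v ∈ S, ((ω i).2.2.filter (fun e => v ∈ e)).card = 0 := by
            refine Finset.sum_eq_zero (fun v hvS => ?_)
            rw [Finset.card_eq_zero, Finset.filter_eq_empty_iff]
            intro e he hve
            apply hcr
            obtain ⟨p, h1, h2⟩ := hω i
            have he' : e ∈ p.edges := by rw [h2] at he; simpa using he
            have hsup : v ∈ p.support := by
              obtain ⟨u, rfl⟩ := hve
              exact p.fst_mem_support_of_mem_edges he'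
            refine touch_cross ω hH i _ _ (p.takeUntil v hsup) (fun e he => ?_) S (Or.inr ⟨hx, hvS⟩)
            rw [h2, List.mem_toFinset]
            exact p.edges_takeUntil_subset_edges hsup he
          rw [h0]
          simp only [Nat.cast_zero]
          positivity
    have hL : (0:ℝ) ≤ 2 * L := by positivity
    have h3 : N + ∑ i, (if (ω i).1 ∈ S then (1:ℝ) else 0) ≤ 25 * (κ * (edgeBoundary H S).ncard) := by
      linarith
    have := mul_le_mul_of_nonneg_left h3 hL
    linarith
end aux

lemma boundary_ncard_le {V : Type} [Fintype V] [DecidableEq V] (G : SimpleGraph V)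
    (a : V → V → ℝ) (a1 : ∀ u v, G.Adj u v → a u v = 1) (a0 : ∀ u v, ¬ G.Adj u v → a u v = 0)
    (X : Finset V) : ((edgeBoundary G X).ncard : ℝ) ≤ ∑ v ∈ X, ∑ u ∈ Xᶜ, a v u := by
  classical
  have h1 : edgeBoundary G X ⊆
      ((((X ×ˢ Xᶜ).filter (fun p => G.Adj p.1 p.2)).image (fun p => s(p.1, p.2)) : Finset (Sym2 V)) : Set (Sym2 V)) := by
    rintro e ⟨he, u, v, rfl, hu, hv⟩
    simp only [Finset.coe_image, Set.mem_image]
    exact ⟨(u, v), by simpa [hu, hv] using he, rfl⟩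
  have h2 := Set.ncard_le_ncard h1 (Finset.finite_toSet _)
  rw [Set.ncard_coe_finset] at h2
  have h3 := h2.trans Finset.card_image_le
  have h4 : (((X ×ˢ Xᶜ).filter (fun p => G.Adj p.1 p.2)).card : ℝ) = ∑ v ∈ X, ∑ u ∈ Xᶜ, a v u := by
    rw [Finset.card_filter, ← Finset.sum_product']
    push_cast
    refine Finset.sum_congr rfl (fun p _ => ?_)
    split_ifs with h
    · rw [a1 _ _ h]
    · rw [a0 _ _ h]
  rw [← h4]
  exact_mod_cast h3

lemma boundary_compl {V : Type} [Fintype V] [DecidableEq V] (H : SimpleGraph V) (S : Finset V) :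
    edgeBoundary H Sᶜ = edgeBoundary H S := by
  ext e
  constructor
  · rintro ⟨he, u, v, rfl, hu, hv⟩
    exact ⟨he, v, u, Sym2.eq_swap, by simpa using hv, by simpa using hu⟩
  · rintro ⟨he, u, v, rfl, hu, hv⟩
    exact ⟨he, v, u, Sym2.eq_swap, by simpa using hv, by simpa using hu⟩

lemma boundary_single {V : Type} [Fintype V] [DecidableEq V] (H : SimpleGraph V) (v : V) :
    (edgeBoundary H {v}).ncard ≤ (H.neighborSet v).ncard := by
  have h1 : edgeBoundary H {v} ⊆ (fun u => s(v, u)) '' H.neighborSet v := by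
    rintro e ⟨he, u, x, rfl, hu, hv⟩
    rw [Finset.mem_singleton] at hu
    subst hu
    exact ⟨x, he, rfl⟩
  exact (Set.ncard_le_ncard h1 (Set.toFinite _)).trans (Set.ncard_image_le (Set.toFinite _))

lemma ectx_of {V : Type} [Fintype V] [DecidableEq V] (G : SimpleGraph V) (φ : ℝ)
    (hp : 0 < φ) (h1 : φ ≤ 1) (h : IsExpander G φ) :
    ∃ a : V → V → ℝ, ECtx G a (fun v => ((G.neighborSet v).ncard : ℝ)) φ := by
  classical
  refine ⟨fun u v => if G.Adj u v then 1 else 0, hp, h1, fun u v h => if_pos h, fun u v h => if_neg h, ?_, ?_⟩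
  · intro v
    rw [Finset.sum_boole]
    congr 1
    rw [← Set.ncard_coe_finset]
    congr 1
    ext u; simp
  · intro X
    refine le_trans ?_ (boundary_ncard_le G _ (fun u v h => if_pos h) (fun u v h => if_neg h) X)
    by_cases hm : min (∑ v ∈ X, ((G.neighborSet v).ncard : ℝ)) (∑ v ∈ Xᶜ, ((G.neighborSet v).ncard : ℝ)) = 0
    · rw [hm]; simp
    have hm0 : 0 < min (∑ v ∈ X, ((G.neighborSet v).ncard : ℝ)) (∑ v ∈ Xᶜ, ((G.neighborSet v).ncard : ℝ)) := by
      refine lt_of_le_of_ne ?_ (Ne.symm hm)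
      exact le_min (Finset.sum_nonneg (fun v _ => by positivity)) (Finset.sum_nonneg (fun v _ => by positivity))
    have hX : X.Nonempty := by
      rw [Finset.nonempty_iff_ne_empty]; rintro rfl; simp at hm0
    have hX' : X ≠ Finset.univ := by rintro rfl; simp at hm0
    have := h X hX hX'
    unfold cutConductance vol at this
    push_cast at this
    rwa [le_div_iff₀ hm0] at this

lemma expander_of {V : Type} [Fintype V] [DecidableEq V] (H : SimpleGraph V) (ψ : ℝ) (hψ : 0 ≤ ψ)
    (hdeg : ∀ v, 0 < (H.neighborSet v).ncard)
    (h : ∀ S : Finset V, S.Nonempty → 2 * S.card ≤ Fintype.card V →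
      ψ * vol H S ≤ (edgeBoundary H S).ncard) : IsExpander H ψ := by
  intro S hS hS'
  have hvp : ∀ T : Finset V, T.Nonempty → 0 < vol H T :=
    fun T hT => Finset.sum_pos (fun v _ => hdeg v) hT
  have hSc : Sᶜ.Nonempty := by
    rw [Finset.nonempty_iff_ne_empty]; intro hh; exact hS' (Finset.compl_eq_empty_iff S |>.mp hh)
  unfold cutConductance
  have hpos : 0 < min (vol H S) (vol H Sᶜ) := lt_min (hvp _ hS) (hvp _ hSc)
  rw [le_div_iff₀ (by exact_mod_cast hpos)]
  by_cases hc : 2 * S.card ≤ Fintype.card V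
  · refine le_trans (mul_le_mul_of_nonneg_left ?_ hψ) (h S hS hc)
    exact_mod_cast min_le_left _ _
  · have := h Sᶜ hSc (by rw [Finset.card_compl]; omega)
    rw [boundary_compl] at this
    refine le_trans (mul_le_mul_of_nonneg_left ?_ hψ) this
    exact_mod_cast min_le_right _ _

/-- **expander sparsification.** There are absolute constants `C, c > 0` such
that every `n`-vertex `φ`-expander `G` (`0 < φ ≤ 1`) with minimum degree at least `f'`,
where `C·log n ≤ f' ≤ n`, admits a spanning subgraph `H ≤ G` with
(i) conductance at least `φ²/(C·(log n)^c)`,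
(ii) at most `C·f'·n·(log n)/φ` edges, and
(iii) minimum degree at least `f'·φ/(C·(log n)^c)`. -/
theorem expander_sparsification :
    ∃ C c : ℝ, 0 < C ∧ 0 < c ∧
      ∀ (V : Type) [Fintype V] [DecidableEq V], ∀ (G : SimpleGraph V) (φ : ℝ) (f' : ℕ),
        0 < φ → φ ≤ 1 →
        C * Real.log (Fintype.card V) ≤ f' → f' ≤ Fintype.card V →
        (∀ v : V, f' ≤ (G.neighborSet v).ncard) →
        IsExpander G φ →
        ∃ H : SimpleGraph V, H ≤ G ∧
          IsExpander H (φ ^ 2 / (C * Real.log (Fintype.card V) ^ c)) ∧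
          (H.edgeSet.ncard : ℝ) ≤ C * f' * Fintype.card V * Real.log (Fintype.card V) / φ ∧
          ∀ v : V, (f' : ℝ) * φ / (C * Real.log (Fintype.card V) ^ c) ≤
            (H.neighborSet v).ncard := by
  refine ⟨10 ^ 7, 2, by norm_num, by norm_num, ?_⟩
  intro V _ _ G φ f hp h1 hf hfn hdeg hexp
  have hrp : ∀ x : ℝ, x ^ (2:ℝ) = x ^ 2 := fun x => Real.rpow_two x
  rw [hrp]
  by_cases hn1 : Fintype.card V ≤ 1
  · refine ⟨⊥, bot_le, ?_, ?_, ?_⟩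
    · intro S hS hS'
      exfalso
      apply hS'
      have : Subsingleton V := Fintype.card_le_one_iff_subsingleton.mp hn1
      obtain ⟨x, hx⟩ := hS
      ext y
      simp only [Finset.mem_univ, iff_true]
      rwa [Subsingleton.elim y x]
    · have : 0 ≤ Real.log (Fintype.card V) := Real.log_natCast_nonneg _
      simp only [SimpleGraph.edgeSet_bot, Set.ncard_empty, Nat.cast_zero]
      positivity
    · intro v
      have : Fintype.card V = 1 := by
        have := Fintype.card_pos_iff.mpr ⟨v⟩; omega
      rw [this]; simp
  push Not at hn1
  set n := (Fintype.card V : ℝ) with hn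
  set Lg := Real.log n with hLg
  have hn2 : 2 ≤ n := by rw [hn]; exact_mod_cast hn1
  have hlog2 := Real.log_two_gt_d9
  have hLg2 : Real.log 2 ≤ Lg := Real.log_le_log (by norm_num) hn2
  have hfn' : (f : ℝ) ≤ n := by rw [hn]; exact_mod_cast hfn
  have hn3 : 3 ≤ n := by linarith
  have hV3 : 3 ≤ Fintype.card V := by rw [hn] at hn3; exact_mod_cast hn3
  have hn0 : 0 < n := by linarith
  have hLg1 : 1 ≤ Lg := by
    rw [hLg, Real.le_log_iff_exp_le hn0]
    have := Real.exp_one_lt_d9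
    linarith
  have hf0' : (0:ℝ) < f := by linarith
  have hf0 : 0 < f := by exact_mod_cast hf0'
  obtain ⟨a, E⟩ := ectx_of G φ hp h1 hexp
  have hφi : 1 ≤ 1 / φ := by rw [le_div_iff₀ hp]; linarith
  have hLφ : Lg ≤ Lg / φ := by rw [le_div_iff₀ hp]; nlinarith
  -- k
  set k := Nat.clog 2 (Fintype.card V) with hk
  have hk1 : Fintype.card V ≤ 2 ^ k := Nat.le_pow_clog (by norm_num) _
  have hk2 : (k : ℝ) ≤ 3 * Lg := by
    have h2 : 2 ^ (k - 1) < Fintype.card V := Nat.pow_pred_clog_lt_self (by norm_num) (by omega)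
    have h3 : ((2:ℝ) ^ (k - 1)) ≤ n := by rw [hn]; exact_mod_cast h2.le
    have h4 := Real.log_le_log (by positivity) h3
    rw [Real.log_pow] at h4
    have h5 : (k : ℝ) ≤ ((k - 1 : ℕ) : ℝ) + 1 := by
      have : k ≤ (k - 1) + 1 := by omega
      exact_mod_cast this
    have h6 : (0:ℝ) ≤ ((k - 1 : ℕ) : ℝ) := by positivity
    nlinarith
  -- h0
  set h0 := ⌈3 / φ * (2 + 2 * Lg)⌉₊ with hh0
  have hh0a : (h0 : ℝ) ≤ 13 * (Lg / φ) := by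
    have h2 := (Nat.ceil_lt_add_one (a := 3 / φ * (2 + 2 * Lg)) (by positivity)).le
    have h3 : 3 / φ * (2 + 2 * Lg) ≤ 12 * (Lg / φ) := by
      have : 3 / φ * (2 + 2 * Lg) = 6 * (1 / φ) + 6 * (Lg / φ) := by ring
      have h4 : 1 / φ ≤ Lg / φ := by gcongr
      linarith
    linarith
  have hh0b : (1 - φ / 3) ^ h0 * ∑ v, ((G.neighborSet v).ncard : ℝ) ≤ 1 / 4 := by
    have h2 := pow_bound hp h1 h0 (2 + 2 * Lg) (Nat.le_ceil _)
    have h3 : ∑ v, ((G.neighborSet v).ncard : ℝ) ≤ n ^ 2 := by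
      have : ∀ v ∈ (Finset.univ : Finset V), ((G.neighborSet v).ncard : ℝ) ≤ n := by
        intro v _
        rw [hn]
        have := Set.ncard_le_ncard (Set.subset_univ (G.neighborSet v)) (Set.toFinite _)
        rw [Set.ncard_univ, Nat.card_eq_fintype_card] at this
        exact_mod_cast this
      have := Finset.sum_le_card_nsmul _ _ _ this
      rw [Finset.card_univ, nsmul_eq_mul, ← hn] at this
      linarith [pow_two n]
    have h4 : Real.exp (-(2 + 2 * Lg)) = Real.exp (-2) / n ^ 2 := by
      rw [neg_add, Real.exp_add, Real.exp_neg (2 * Lg), ← div_eq_mul_inv]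
      congr 1
      have : (2:ℝ) * Lg = ((2:ℕ):ℝ) * Lg := by norm_num
      rw [this, Real.exp_nat_mul, hLg, Real.exp_log hn0]
    have h5 : Real.exp (-2) ≤ 1 / 4 := by
      rw [Real.exp_neg, one_div]
      apply inv_anti₀ (by norm_num)
      have := Real.add_one_le_exp (1 : ℝ)
      have e : Real.exp 2 = Real.exp 1 * Real.exp 1 := by rw [← Real.exp_add]; norm_num
      nlinarith
    calc _ ≤ (Real.exp (-2) / n ^ 2) * n ^ 2 := by
          rw [← h4]
          exact mul_le_mul h2 h3 (Finset.sum_nonneg (fun v _ => by positivity)) (Real.exp_pos _).le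
      _ = Real.exp (-2) := by field_simp
      _ ≤ 1 / 4 := h5
  obtain ⟨ω, hω, hc, hv, hS⟩ := E.sample f hf0 (fun v => by exact_mod_cast hdeg v) hV3 k h0 hk1 hh0b
  rw [← hn, ← hLg] at hc hv hS
  set L := 2 * (h0 + k * ⌈6 / φ⌉₊) with hL
  set κ := 4 * (9 + 48 * (k:ℝ)) / φ + 3 * Lg with hκ
  have hLb : (L : ℝ) ≤ 68 * (Lg / φ) := by
    have h2 : (⌈6 / φ⌉₊ : ℝ) ≤ 7 / φ := by
      have := (Nat.ceil_lt_add_one (a := 6 / φ) (by positivity)).le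
      have e : 7 / φ = 6 / φ + 1 / φ := by ring
      linarith
    have h3 : (k : ℝ) * ⌈6 / φ⌉₊ ≤ (3 * Lg) * (7 / φ) :=
      mul_le_mul hk2 h2 (by positivity) (by positivity)
    have h4 : (3 * Lg) * (7 / φ) = 21 * (Lg / φ) := by ring
    rw [hL]; push_cast
    linarith
  have hκb : κ ≤ 615 * (Lg / φ) := by
    have h2 : 4 * (9 + 48 * (k:ℝ)) / φ ≤ 4 * (153 * Lg) / φ := by
      gcongr; linarith
    have h3 : 4 * (153 * Lg) / φ = 612 * (Lg / φ) := by ring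
    linarith
  have hκ0 : 0 < κ := by positivity
  obtain ⟨H, hHG, hHe, hHS⟩ := build ω L κ f hω hc (fun v => (hv v).trans (by linarith)) (by
    intro S hSne hS2
    refine le_trans ?_ (hS S hS2)
    have : (1:ℝ) ≤ S.card := by exact_mod_cast hSne.card_pos
    nlinarith)
  have hmd : ∀ v, (f : ℝ) * φ / (10 ^ 7 * Lg ^ 2) ≤ (H.neighborSet v).ncard := by
    intro v
    have h2 := (hHS {v} (Finset.singleton_nonempty v) (by simp; omega)).1
    simp only [Finset.card_singleton, Nat.cast_one, mul_one] at h2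
    have h3 : ((edgeBoundary H {v}).ncard : ℝ) ≤ (H.neighborSet v).ncard := by
      exact_mod_cast boundary_single H v
    set D : ℝ := ((H.neighborSet v).ncard : ℝ) with hD
    have hD0 : 0 ≤ D := by positivity
    have h4 : (f : ℝ) / 8 ≤ 615 * (Lg / φ) * D := by
      refine h2.trans (mul_le_mul hκb h3 (by positivity) (by positivity))
    have h5 : (f : ℝ) * φ ≤ 4920 * Lg * D := by
      have := mul_le_mul_of_nonneg_right h4 hp.le
      have e : 615 * (Lg / φ) * D * φ = 615 * Lg * D := by field_simp
      linarith
    rw [div_le_iff₀ (by positivity)]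
    have h6 : Lg * D ≤ Lg ^ 2 * D := by
      have : Lg ≤ Lg ^ 2 := by nlinarith
      exact mul_le_mul_of_nonneg_right this hD0
    have : 0 ≤ Lg ^ 2 * D := by positivity
    nlinarith
  refine ⟨H, hHG, ?_, ?_, hmd⟩
  · refine expander_of H _ (by positivity) ?_ ?_
    · intro v
      have : (0:ℝ) < (H.neighborSet v).ncard := lt_of_lt_of_le (by positivity) (hmd v)
      exact_mod_cast this
    · intro S hSne hS2
      have h2 := (hHS S hSne hS2).2
      set B : ℝ := ((edgeBoundary H S).ncard : ℝ) with hB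
      have hB0 : 0 ≤ B := by positivity
      have h3 : 50 * (L:ℝ) * κ ≤ 50 * (68 * (Lg / φ)) * (615 * (Lg / φ)) := by gcongr
      have h4 := h2.trans (mul_le_mul_of_nonneg_right h3 hB0)
      rw [div_mul_eq_mul_div, div_le_iff₀ (by positivity)]
      have h5 := mul_le_mul_of_nonneg_left h4 (sq_nonneg φ)
      have e : φ ^ 2 * (50 * (68 * (Lg / φ)) * (615 * (Lg / φ)) * B) = 2091000 * (Lg ^ 2 * B) := by
        field_simp; ring
      have : 0 ≤ Lg ^ 2 * B := by positivity
      linarith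
  · refine hHe.trans ?_
    push_cast
    rw [← hn]
    have h2 : (f:ℝ) * n * L ≤ f * n * (68 * (Lg / φ)) := by gcongr
    have h3 : (f:ℝ) * n * (68 * (Lg / φ)) = 68 * (f * n * Lg / φ) := by ring
    have h4 : 10 ^ 7 * (f:ℝ) * n * Lg / φ = 10 ^ 7 * (f * n * Lg / φ) := by ring
    have : 0 ≤ f * n * Lg / φ := by positivity
    rw [h4]; linarith
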